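/- arXiv:1907.10436 — 4 statements merged into one kernel-verified Lean document; each statement's English description precedes it below -/
import Mathlib

section
/- There exists a finite set Λ_B ⊂ S² ∩ ℚ³ of rational unit vectors, for each k ∈ Λ_B a pair of vectors k₁, k₂ ∈ ℝ³ such that (k, k₁, k₂) is an orthonormal basis of ℝ³, a constant ε_B > 0, and smooth functions γ_(k) : B_{ε_B}(0) → ℝ that are strictly positive on B_{ε_B}(0), where B_{ε_B}(0) is the open ball of radius ε_B (in the Frobenius norm) centered at the zero matrix in the space of 3×3 real skew-symmetric matrices, such that for every skew-symmetric 3×3 matrix A with |A| < ε_B one has the identity A = Σ_{k ∈ Λ_B} γ_(k)(A)² (k₁ ⊗ k₂ − k₂ ⊗ k₁). -/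
/-!
STATEMENT 2: The First Geometric Lemma.
There is a finite set Λ_B of rational unit vectors k, with associated orthonormal bases
(k, k₁, k₂), a radius ε_B > 0, and smooth strictly positive functions γ_(k) on the ball
B_{ε_B}(0) (Frobenius norm) in the space of 3×3 skew-symmetric matrices, such that every
skew-symmetric A with |A| < ε_B satisfies
  A = Σ_{k ∈ Λ_B} γ_(k)(A)² (k₁ ⊗ k₂ − k₂ ⊗ k₁).
Here `Matrix.vecMulVec v w` is the tensor product v ⊗ w.
-/

noncomputable section

open Matrix

attribute [local instance] Matrix.normedAddCommGroup Matrix.normedSpace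

/-- Frobenius norm of a 3×3 real matrix. -/
def fnorm (A : Matrix (Fin 3) (Fin 3) ℝ) : ℝ := Real.sqrt (∑ i, ∑ j, (A i j) ^ 2)

/-- `(k, k₁, k₂)` is an orthonormal basis of ℝ³ (w.r.t. the Euclidean inner product). -/
def IsONBasis (k k₁ k₂ : Fin 3 → ℝ) : Prop :=
  (∑ i, k i ^ 2 = 1) ∧ (∑ i, k₁ i ^ 2 = 1) ∧ (∑ i, k₂ i ^ 2 = 1) ∧
  (∑ i, k i * k₁ i = 0) ∧ (∑ i, k i * k₂ i = 0) ∧ (∑ i, k₁ i * k₂ i = 0)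

/-!
The matrix of `x ↦ a ⨯₃ x` is linear in `a`, represents every skew-symmetric matrix, and equals
`k₁ ⊗ k₂ - k₂ ⊗ k₁` for `a = k₂ ⨯₃ k₁`. So the decomposition of matrices reduces to writing a
vector `a ∈ ℝ³` as a positive combination of unit vectors `k`, each completed to an orthonormal
basis with `k₂ ⨯₃ k₁ = k`. For the signed coordinate vectors `k = ±eᵢ` this is
`a = ∑ (1 + (a ⬝ᵥ k) / 2) • k`, as the constant terms cancel in pairs. By Cauchy-Schwarz the
coefficients are positive for `|a| < 2`, so they have smooth positive square roots; the axial vector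
`a` of a skew-symmetric matrix `A` satisfies `|a| ≤ |A|`, which makes `2` an admissible radius.
-/

section CrossMatrix

variable {R : Type*} [CommRing R]

/-- The matrix `[a]_×` of the linear map `x ↦ a ⨯₃ x`, as a linear function of `a`. -/
def crossMatrix : (Fin 3 → R) →ₗ[R] Matrix (Fin 3) (Fin 3) R :=
  LinearMap.toMatrix'.toLinearMap ∘ₗ crossProduct

lemma crossMatrix_apply (a : Fin 3 → R) :
    crossMatrix a = !![0, -a 2, a 1; a 2, 0, -a 0; -a 1, a 0, 0] := by
  ext i j
  fin_cases i <;> fin_cases j <;> simp [crossMatrix, cross_apply, LinearMap.toMatrix'_apply]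

lemma crossMatrix_cross (v w : Fin 3 → R) :
    crossMatrix (v ⨯₃ w) = vecMulVec w v - vecMulVec v w := by
  rw [crossMatrix_apply, cross_apply]
  ext i j
  fin_cases i <;> fin_cases j <;> simp [vecMulVec_apply] <;> ring

/-- The axial vector of a `3 × 3` matrix. It is meant for skew-symmetric matrices, on which it
inverts `crossMatrix`; on other matrices it reads only the three entries below. -/
def axialVector (A : Matrix (Fin 3) (Fin 3) R) : Fin 3 → R :=
  ![A 2 1, A 0 2, A 1 0]

lemma crossMatrix_axialVector [NoZeroDivisors R] [NeZero (2 : R)]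
    {A : Matrix (Fin 3) (Fin 3) R} (hA : Aᵀ = -A) : crossMatrix (axialVector A) = A := by
  have skew (i j : Fin 3) : A j i = -A i j := congrFun₂ hA i j
  have diag (i : Fin 3) : A i i = 0 :=
    (mul_eq_zero.mp (by linear_combination skew i i : 2 * A i i = 0)).resolve_left two_ne_zero
  rw [crossMatrix_apply]
  ext i j
  fin_cases i <;> fin_cases j <;> simp [axialVector, diag, ← skew]

end CrossMatrix

lemma axialVector_dotProduct_self_le (A : Matrix (Fin 3) (Fin 3) ℝ) :
    axialVector A ⬝ᵥ axialVector A ≤ fnorm A ^ 2 := by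
  rw [fnorm, Real.sq_sqrt (by positivity)]
  simp only [axialVector, vec3_dotProduct, Fin.sum_univ_three, cons_val]
  linarith [sq_nonneg (A 0 0), sq_nonneg (A 0 1), sq_nonneg (A 1 1), sq_nonneg (A 1 2),
    sq_nonneg (A 2 0), sq_nonneg (A 2 2)]

lemma abs_axialVector_dotProduct_le (A : Matrix (Fin 3) (Fin 3) ℝ) {k : Fin 3 → ℝ}
    (hk : k ⬝ᵥ k = 1) : |axialVector A ⬝ᵥ k| ≤ fnorm A := by
  refine abs_le_of_sq_le_sq ?_ (Real.sqrt_nonneg _)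
  calc (axialVector A ⬝ᵥ k) ^ 2
      ≤ (axialVector A ⬝ᵥ axialVector A) * (k ⬝ᵥ k) := by
        simpa only [dotProduct, ← sq] using
          Finset.sum_mul_sq_le_sq_mul_sq Finset.univ (axialVector A) k
    _ ≤ fnorm A ^ 2 := by
        rw [hk, mul_one]
        exact axialVector_dotProduct_self_le A

lemma one_add_axialVector_dotProduct_div_two_pos {A : Matrix (Fin 3) (Fin 3) ℝ}
    {k : Fin 3 → ℝ} (hk : k ⬝ᵥ k = 1) (hA : fnorm A < 2) :
    0 < 1 + (axialVector A ⬝ᵥ k) / 2 := by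
  linarith [neg_le_of_abs_le (abs_axialVector_dotProduct_le A hk)]

lemma contDiff_axialVector_dotProduct {n : WithTop ℕ∞} (k : Fin 3 → ℝ) :
    ContDiff ℝ n fun A : Matrix (Fin 3) (Fin 3) ℝ ↦ axialVector A ⬝ᵥ k := by
  simp only [axialVector, vec3_dotProduct, cons_val]
  fun_prop

lemma isONBasis_iff_dotProduct {k k₁ k₂ : Fin 3 → ℝ} :
    IsONBasis k k₁ k₂ ↔ k ⬝ᵥ k = 1 ∧ k₁ ⬝ᵥ k₁ = 1 ∧ k₂ ⬝ᵥ k₂ = 1 ∧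
      k ⬝ᵥ k₁ = 0 ∧ k ⬝ᵥ k₂ = 0 ∧ k₁ ⬝ᵥ k₂ = 0 := by
  simp only [IsONBasis, dotProduct, sq]

lemma isONBasis_cross {k u : Fin 3 → ℝ} (hk : k ⬝ᵥ k = 1) (hu : u ⬝ᵥ u = 1)
    (hku : k ⬝ᵥ u = 0) : IsONBasis k u (u ⨯₃ k) := by
  refine isONBasis_iff_dotProduct.mpr
    ⟨hk, hu, ?_, hku, dot_cross_self u k, dot_self_cross u k⟩
  rw [cross_dot_cross, hu, hk, dotProduct_comm u k, hku]
  ring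

lemma cross_cross_self_of_orthogonal {R : Type*} [CommRing R] {k u : Fin 3 → R}
    (hu : u ⬝ᵥ u = 1) (hku : k ⬝ᵥ u = 0) : u ⨯₃ k ⨯₃ u = k := by
  simp [cross_cross_eq_smul_sub_smul, hu, hku]

section SignedBasis

/-- The signed coordinate vectors `±eᵢ` of `ι → R`. -/
def signedBasis (ι R : Type*) [Fintype ι] [DecidableEq ι] [DecidableEq R] [Ring R] :
    Finset (ι → R) :=
  (Finset.univ ×ˢ {1, -1}).image fun p : ι × R ↦ Pi.single p.1 p.2

variable {ι R : Type*} [Fintype ι] [DecidableEq ι] [DecidableEq R]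

lemma mem_signedBasis [Ring R] {k : ι → R} :
    k ∈ signedBasis ι R ↔ ∃ i, k = Pi.single i 1 ∨ k = Pi.single i (-1) := by
  simp [signedBasis, eq_comm]

lemma signedBasis_nonempty [Ring R] [Nonempty ι] : (signedBasis ι R).Nonempty := by
  simp [signedBasis]

lemma dotProduct_self_of_mem_signedBasis [Ring R] {k : ι → R} (hk : k ∈ signedBasis ι R) :
    k ⬝ᵥ k = 1 := by
  obtain ⟨i, rfl | rfl⟩ := mem_signedBasis.mp hk <;> simp

lemma dotProduct_comp_of_mem_signedBasis [Ring R] {k : ι → R} (hk : k ∈ signedBasis ι R)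
    {σ : ι → ι} (hσ : ∀ i, σ i ≠ i) : k ⬝ᵥ k ∘ σ = 0 := by
  obtain ⟨i, rfl | rfl⟩ := mem_signedBasis.mp hk <;> simp [hσ]

lemma exists_ratCast_eq_of_mem_signedBasis [DivisionRing R] {k : ι → R}
    (hk : k ∈ signedBasis ι R) (i : ι) : ∃ q : ℚ, k i = q := by
  obtain ⟨j, rfl | rfl⟩ := mem_signedBasis.mp hk
  · exact ⟨if i = j then 1 else 0, by split_ifs with h <;> simp [h]⟩
  · exact ⟨if i = j then -1 else 0, by split_ifs with h <;> simp [h]⟩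

lemma sum_signedBasis [Ring R] [NeZero (2 : R)] {M : Type*} [AddCommMonoid M]
    (f : (ι → R) → M) :
    ∑ k ∈ signedBasis ι R, f k = ∑ i, (f (Pi.single i 1) + f (Pi.single i (-1))) := by
  have one_ne_neg_one : (1 : R) ≠ -1 := fun h ↦
    two_ne_zero (one_add_one_eq_two.symm.trans (eq_neg_iff_add_eq_zero.mp h))
  have : Nontrivial R := ⟨1, -1, one_ne_neg_one⟩
  rw [signedBasis, Finset.sum_image, Finset.sum_product]
  · simp only [Finset.sum_pair one_ne_neg_one]
  · rintro ⟨i, s⟩ his ⟨j, t⟩ - hst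
    have hs : s ≠ 0 := by
      rcases (by simpa using his : s = 1 ∨ s = -1) with rfl | rfl <;> simp
    have hij : i = j := by
      by_contra hij
      exact hs (by simpa [hij] using congrFun hst i)
    subst hij
    exact congrArg (Prod.mk i) (Pi.single_injective i hst)

lemma sum_signedBasis_smul [Field R] [NeZero (2 : R)] (a : ι → R) :
    ∑ k ∈ signedBasis ι R, (1 + (a ⬝ᵥ k) / 2) • k = a := by
  have pair (i : ι) : (1 + (a ⬝ᵥ Pi.single i 1) / 2) • (Pi.single i 1 : ι → R) +
      (1 + (a ⬝ᵥ Pi.single i (-1)) / 2) • (Pi.single i (-1) : ι → R) = Pi.single i (a i) := by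
    simp only [← Pi.single_smul, ← Pi.single_add, dotProduct_single, smul_eq_mul]
    congr 1
    field_simp
    ring
  simp only [sum_signedBasis, pair, Finset.univ_sum_single]

lemma sum_signedBasis_smul_crossMatrix [Field R] [NeZero (2 : R)]
    {A : Matrix (Fin 3) (Fin 3) R} (hA : Aᵀ = -A) :
    ∑ k ∈ signedBasis (Fin 3) R, (1 + (axialVector A ⬝ᵥ k) / 2) • crossMatrix k = A := by
  simp only [← map_smul, ← map_sum, sum_signedBasis_smul, crossMatrix_axialVector hA]

end SignedBasis

theorem first_geometric_lemma :
    ∃ (ΛB : Finset (Fin 3 → ℝ)) (k₁ k₂ : (Fin 3 → ℝ) → (Fin 3 → ℝ)) (εB : ℝ)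
      (γ : (Fin 3 → ℝ) → Matrix (Fin 3) (Fin 3) ℝ → ℝ),
      0 < εB ∧ ΛB.Nonempty ∧
      -- the elements of Λ_B are rational unit vectors
      (∀ k ∈ ΛB, (∀ i, ∃ q : ℚ, k i = (q : ℝ)) ∧ ∑ i, k i ^ 2 = 1) ∧
      -- each k ∈ Λ_B comes with an orthonormal basis (k, k₁, k₂)
      (∀ k ∈ ΛB, IsONBasis k (k₁ k) (k₂ k)) ∧
      -- the γ_(k) are smooth on the ball of radius ε_B around 0
      (∀ k ∈ ΛB, ContDiffOn ℝ (⊤ : ℕ∞) (γ k) {A | fnorm A < εB}) ∧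
      -- the γ_(k) are strictly positive on the skew-symmetric matrices in that ball
      (∀ k ∈ ΛB, ∀ A : Matrix (Fin 3) (Fin 3) ℝ, Aᵀ = -A → fnorm A < εB → 0 < γ k A) ∧
      -- the decomposition identity on skew-symmetric matrices with |A| < ε_B
      (∀ A : Matrix (Fin 3) (Fin 3) ℝ, Aᵀ = -A → fnorm A < εB →
        A = ∑ k ∈ ΛB, (γ k A) ^ 2 • (vecMulVec (k₁ k) (k₂ k) - vecMulVec (k₂ k) (k₁ k))) := by
  let u (k : Fin 3 → ℝ) : Fin 3 → ℝ := k ∘ finRotate 3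
  have unit {k} (hk : k ∈ signedBasis (Fin 3) ℝ) : k ⬝ᵥ k = 1 :=
    dotProduct_self_of_mem_signedBasis hk
  have unit_u {k} (hk : k ∈ signedBasis (Fin 3) ℝ) : u k ⬝ᵥ u k = 1 :=
    (comp_equiv_dotProduct_comp_equiv k k (finRotate 3)).trans (unit hk)
  have orthogonal {k} (hk : k ∈ signedBasis (Fin 3) ℝ) : k ⬝ᵥ u k = 0 :=
    dotProduct_comp_of_mem_signedBasis hk (by decide)
  have weight_pos {k} (hk : k ∈ signedBasis (Fin 3) ℝ) {A} (hA : fnorm A < 2) :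
      0 < 1 + (axialVector A ⬝ᵥ k) / 2 :=
    one_add_axialVector_dotProduct_div_two_pos (unit hk) hA
  refine ⟨signedBasis (Fin 3) ℝ, u, fun k ↦ u k ⨯₃ k, 2,
    fun k A ↦ √(1 + (axialVector A ⬝ᵥ k) / 2), two_pos, signedBasis_nonempty,
    fun k hk ↦ ⟨exists_ratCast_eq_of_mem_signedBasis hk, ?_⟩,
    fun k hk ↦ isONBasis_cross (unit hk) (unit_u hk) (orthogonal hk),
    fun k hk ↦ ?_, fun k hk A _ hA ↦ Real.sqrt_pos.mpr (weight_pos hk hA), fun A hskew hA ↦ ?_⟩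
  · simpa only [dotProduct, ← sq] using unit hk
  · exact (contDiff_const.add ((contDiff_axialVector_dotProduct k).div_const 2)).contDiffOn.sqrt
      fun A hA ↦ (weight_pos hk hA).ne'
  · refine (sum_signedBasis_smul_crossMatrix hskew).symm.trans (Finset.sum_congr rfl fun k hk ↦ ?_)
    rw [Real.sq_sqrt (weight_pos hk hA).le, ← crossMatrix_cross,
      cross_cross_self_of_orthogonal (unit_u hk) (orthogonal hk)]

end
end

section
/- There exists a finite set Λ_u ⊂ S² ∩ ℚ³ of rational unit vectors, disjoint from the set Λ_B = {(1,0,0), (0,1,0), (0,0,1), (3/5, 4/5, 0), (0, −4/5, −3/5)}, for each k ∈ Λ_u a pair of vectors k₁, k₂ ∈ ℝ³ such that (k, k₁, k₂) is an orthonormal basis of ℝ³, a constant ε_u > 0, and smooth functions γ_(k) : B_{ε_u}(Id) → ℝ that are strictly positive on B_{ε_u}(Id), where B_{ε_u}(Id) is the open ball of radius ε_u (in the Frobenius norm) centered at the identity matrix in the space of 3×3 real symmetric matrices, such that for every symmetric 3×3 matrix S with |S − Id| < ε_u one has the identity S = Σ_{k ∈ Λ_u} γ_(k)(S)² (k₁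 ⊗ k₁). -/
/-!
STATEMENT 3: The Second Geometric Lemma.
There is a finite set Λ_u of rational unit vectors k, disjoint from the explicit set Λ_B,
with associated orthonormal bases (k, k₁, k₂), a radius ε_u > 0, and smooth strictly
positive functions γ_(k) on the ball B_{ε_u}(Id) (Frobenius norm) in the space of 3×3
symmetric matrices, such that every symmetric S with |S − Id| < ε_u satisfies
  S = Σ_{k ∈ Λ_u} γ_(k)(S)² (k₁ ⊗ k₁).
Here `Matrix.vecMulVec v w` is the tensor product v ⊗ w.
-/

noncomputable section

open Matrix

attribute [local instance] Matrix.normedAddCommGroup Matrix.normedSpace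

/-- The explicit wavevector set Λ_B of the first geometric lemma. -/
def ΛBset : Set (Fin 3 → ℝ) :=
  {![1, 0, 0], ![0, 1, 0], ![0, 0, 1], ![3/5, 4/5, 0], ![0, -4/5, -3/5]}

/-!
Let `v` run over the six vectors `a eᵢ ± b eᵢ₊₁`, with indices mod 3. Adding, respectively
subtracting, `v ⊗ v` for the two signs gives `2 (a² Eᵢᵢ + b² Eᵢ₊₁,ᵢ₊₁)`, respectively
`2ab (Eᵢ,ᵢ₊₁ + Eᵢ₊₁,ᵢ)`. Hence a symmetric `S` is a combination of the `v ⊗ v`: its off-diagonal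
entries determine the differences of the coefficients, and its diagonal determines their sums
through a circulant system `a² xᵢ + b² xᵢ₋₁ = Sᵢᵢ`. The coefficients are linear in `S`, and they all
equal `1 / (2 (a² + b²))` at the identity, so they are positive near it and have smooth square roots
there. Taking `v = k₁` with `(a, b) = (3/5, -4/5)`, the wavevector `k` is the vector
`4/5 eᵢ ± 3/5 eᵢ₊₁` orthogonal to `v` in the same coordinate plane.
-/

lemma fin_three_eq_or_eq_add (i j : Fin 3) : j = i ∨ j = i + 1 ∨ j = i + 2 := by
  decide +revert

section PlaneVectors

variable {K : Type*}

/-- The vector `a eᵢ + σ b eᵢ₊₁` of the coordinate plane spanned by `eᵢ` and `eᵢ₊₁`, for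
`p = (i, σ)` and indices mod 3. It provides both the wavevectors `k` and their companions `k₁`. -/
def planeVec [AddCommGroup K] (a b : K) (p : Fin 3 × ℤˣ) : Fin 3 → K :=
  Pi.single p.1 a + Pi.single (p.1 + 1) (p.2 • b)

@[simp]
lemma planeVec_apply_self [AddCommGroup K] (a b : K) (p : Fin 3 × ℤˣ) :
    planeVec a b p p.1 = a := by
  simp [planeVec]

@[simp]
lemma planeVec_apply_add_one [AddCommGroup K] (a b : K) (p : Fin 3 × ℤˣ) :
    planeVec a b p (p.1 + 1) = p.2 • b := by
  simp [planeVec]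

@[simp]
lemma planeVec_apply_add_two [AddCommGroup K] (a b : K) (p : Fin 3 × ℤˣ) :
    planeVec a b p (p.1 + 2) = 0 := by
  simp [planeVec]

lemma planeVec_injective [AddCommGroup K] (a : K) {b : K} (hb : b ≠ -b) :
    Function.Injective (planeVec a b) := by
  have hσb (σ : ℤˣ) : σ • b ≠ 0 := by
    rw [Ne, smul_eq_zero_iff_eq]
    rintro rfl
    simp at hb
  rintro ⟨i, σ⟩ ⟨j, τ⟩ h
  have h₁ := congrFun h (i + 1)
  have h₂ := congrFun h (i + 2)
  rcases fin_three_eq_or_eq_add i j with rfl | rfl | rfl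
  · have hστ : σ • b = τ • b := by simpa [planeVec] using h₁
    rcases Int.units_eq_one_or σ with rfl | rfl <;>
      rcases Int.units_eq_one_or τ with rfl | rfl <;> simp_all [eq_comm]
  · exact absurd (by simpa [planeVec, add_assoc] using h₂.symm) (hσb τ)
  · exact absurd (by simpa [planeVec, add_assoc] using h₁) (hσb σ)

lemma planeVec_dotProduct_planeVec [Ring K] (a b a' b' : K) (p : Fin 3 × ℤˣ) :
    planeVec a b p ⬝ᵥ planeVec a' b' p = a * a' + b * b' := by
  rcases Int.units_eq_one_or p.2 with hσ | hσ <;> simp [planeVec, hσ]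

lemma ratCast_planeVec [DivisionRing K] [CharZero K] (a b : ℚ) (p : Fin 3 × ℤˣ) (j : Fin 3) :
    ((planeVec a b p j : ℚ) : K) = planeVec (a : K) (b : K) p j := by
  rcases fin_three_eq_or_eq_add p.1 j with rfl | rfl | rfl <;> simp [Units.smul_def]

end PlaneVectors

lemma isONBasis_planeVec {c s : ℝ} (h : c ^ 2 + s ^ 2 = 1) (p : Fin 3 × ℤˣ) :
    IsONBasis (planeVec c s p) (planeVec s (-c) p) (Pi.single (p.1 + 2) 1) := by
  simp only [isONBasis_iff_dotProduct, planeVec_dotProduct_planeVec, dotProduct_single_one,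
    planeVec_apply_add_two, Pi.single_eq_same]
  refine ⟨?_, ?_, trivial, ?_, trivial, trivial⟩ <;> linarith

lemma planeVec_notMem_ΛBset {a b : ℝ} (ha : a ≠ 0) (hb : b ≠ 0) (ha₁ : a ≠ 3 / 5)
    (ha₂ : a ≠ -4 / 5) (p : Fin 3 × ℤˣ) : planeVec a b p ∉ ΛBset := by
  -- An element of `ΛBset` with just one zero entry has `3 / 5` or `-4 / 5` in place of `a`.
  intro h
  have h₀ := planeVec_apply_self a b p
  have h₁ := planeVec_apply_add_one a b p
  have h₂ := planeVec_apply_add_two a b p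
  have hσ : p.2 • b ≠ 0 := by simpa [smul_eq_zero_iff_eq] using hb
  generalize planeVec a b p = v at *
  generalize p.1 = i at *
  simp only [ΛBset, Set.mem_insert_iff, Set.mem_singleton_iff] at h
  rcases h with rfl | rfl | rfl | rfl | rfl <;> fin_cases i <;> simp_all [eq_comm]

section Decomposition

variable {K : Type*}

lemma sum_units_smul_vecMulVec_add_smul [CommRing K] {m : Type*} (α β : K) (u v : m → K) :
    ∑ σ : ℤˣ, (α + σ • β) • vecMulVec (u + σ • v) (u + σ • v) =
      (2 * α) • (vecMulVec u u + vecMulVec v v) + (2 * β) • (vecMulVec u v + vecMulVec v u) := by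
  rw [UnitsInt.univ, Finset.sum_pair (units_ne_neg_self 1)]
  ext i j
  simp only [one_smul, Units.neg_smul, Matrix.add_apply, Matrix.smul_apply, vecMulVec_apply,
    Pi.add_apply, Pi.neg_apply, smul_eq_mul]
  ring

/-- The solution `x` of the circulant system `p xᵢ + q xᵢ₋₁ = dᵢ`, with indices mod 3, by
Cramer's rule with determinant `p ^ 3 + q ^ 3`. It determines the diagonal part of the
decomposition. -/
def circulantSol [Field K] (p q : K) (d : Fin 3 → K) (i : Fin 3) : K :=
  (p ^ 2 * d i - p * q * d (i + 2) + q ^ 2 * d (i + 1)) / (p ^ 3 + q ^ 3)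

lemma circulantSol_spec [Field K] {p q : K} (h : p ^ 3 + q ^ 3 ≠ 0) (d : Fin 3 → K) (i : Fin 3) :
    p * circulantSol p q d i + q * circulantSol p q d (i + 2) = d i := by
  have h₁ : i + 2 + 1 = i := by decide +revert
  have h₂ : i + 2 + 2 = i + 1 := by decide +revert
  simp only [circulantSol, h₁, h₂]
  field_simp
  ring

lemma circulantSol_one [Field K] {p q : K} (h : p ^ 3 + q ^ 3 ≠ 0) (i : Fin 3) :
    circulantSol p q 1 i = 1 / (p + q) := by
  have hpq : p ^ 3 + q ^ 3 = (p + q) * (p ^ 2 - p * q + q ^ 2) := by ring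
  have hpq₀ : p + q ≠ 0 := left_ne_zero_of_mul (hpq ▸ h)
  simp only [circulantSol, Pi.one_apply, mul_one]
  rw [div_eq_div_iff h hpq₀, one_mul, hpq, mul_comm]

/-- The coefficient of `v ⊗ v`, for `v = planeVec a b p`, in the decomposition of a symmetric
matrix. -/
def planeCoeff [Field K] (a b : K) (p : Fin 3 × ℤˣ) (S : Matrix (Fin 3) (Fin 3) K) : K :=
  circulantSol (a ^ 2) (b ^ 2) S.diag p.1 / 2 + p.2 • (S p.1 (p.1 + 1) / (2 * (a * b)))

lemma sum_smul_single_add_one [Semiring K] (q : K) (x : Fin 3 → K) :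
    ∑ i, x i • single (i + 1) (i + 1) q = ∑ i, x (i + 2) • single i i q := by
  rw [← Equiv.sum_comp (Equiv.addRight (1 : Fin 3)) fun i => x (i + 2) • single i i q]
  simp [add_assoc]

lemma sum_smul_single_of_isSymm [Semiring K] {S : Matrix (Fin 3) (Fin 3) K} (hS : S.IsSymm) :
    ∑ i, (S i i • single i i 1 + S i (i + 1) • (single i (i + 1) 1 + single (i + 1) i 1)) = S := by
  have h₁₀ := hS.apply 0 1
  have h₂₀ := hS.apply 0 2
  have h₂₁ := hS.apply 1 2
  ext i j
  fin_cases i <;> fin_cases j <;> simp [Fin.sum_univ_three, h₁₀, h₂₀, h₂₁]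

lemma vecMulVec_single_single [MulZeroClass K] {m n : Type*} [DecidableEq m]
    [DecidableEq n] (i : m) (j : n) (a b : K) :
    vecMulVec (Pi.single i a) (Pi.single j b) = single i j (a * b) := by
  ext k l
  by_cases hk : i = k <;> by_cases hl : j = l <;>
    simp [vecMulVec_apply, hk, hl, eq_comm]

lemma sum_units_planeCoeff_smul_vecMulVec [Field K] (h₂ : (2 : K) ≠ 0) {a b : K} (ha : a ≠ 0)
    (hb : b ≠ 0) (S : Matrix (Fin 3) (Fin 3) K) (i : Fin 3) :
    ∑ σ, planeCoeff a b (i, σ) S • vecMulVec (planeVec a b (i, σ)) (planeVec a b (i, σ)) =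
      circulantSol (a ^ 2) (b ^ 2) S.diag i •
          (single i i (a ^ 2) + single (i + 1) (i + 1) (b ^ 2)) +
        S i (i + 1) • (single i (i + 1) 1 + single (i + 1) i 1) := by
  have hv (σ : ℤˣ) : planeVec a b (i, σ) = Pi.single i a + σ • Pi.single (i + 1) b := by
    rw [planeVec, Pi.single_smul]
  simp only [hv, planeCoeff, sum_units_smul_vecMulVec_add_smul, vecMulVec_single_single]
  have hα (x : K) : 2 * (x / 2) = x := mul_div_cancel₀ x h₂
  have hβ (y : K) : 2 * (y / (2 * (a * b))) * (a * b) = y := by field_simp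
  simp only [hα, hβ, smul_add, smul_single, smul_eq_mul, mul_comm b a, mul_one, pow_two]

theorem sum_planeCoeff_smul_vecMulVec [Field K] (h₂ : (2 : K) ≠ 0) {a b : K} (ha : a ≠ 0)
    (hb : b ≠ 0) (hab : (a ^ 2) ^ 3 + (b ^ 2) ^ 3 ≠ 0) {S : Matrix (Fin 3) (Fin 3) K}
    (hS : S.IsSymm) :
    ∑ p, planeCoeff a b p S • vecMulVec (planeVec a b p) (planeVec a b p) = S := by
  set x := circulantSol (a ^ 2) (b ^ 2) S.diag
  have hx (i : Fin 3) : a ^ 2 * x i + b ^ 2 * x (i + 2) = S i i :=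
    circulantSol_spec hab S.diag i
  have diag_part : ∑ i, x i • (single i i (a ^ 2) + single (i + 1) (i + 1) (b ^ 2)) =
      ∑ i, S i i • single i i (1 : K) := by
    simp only [smul_add, Finset.sum_add_distrib, sum_smul_single_add_one]
    rw [← Finset.sum_add_distrib]
    refine Finset.sum_congr rfl fun i _ => ?_
    rw [← hx, smul_single, smul_single, smul_single, ← single_add, smul_eq_mul, smul_eq_mul,
      smul_eq_mul, mul_one, mul_comm (x i), mul_comm (x (i + 2))]
  rw [Fintype.sum_prod_type]
  simp only [sum_units_planeCoeff_smul_vecMulVec h₂ ha hb, Finset.sum_add_distrib]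
  rw [diag_part, ← Finset.sum_add_distrib, sum_smul_single_of_isSymm hS]

lemma planeCoeff_one [Field K] {a b : K} (hab : (a ^ 2) ^ 3 + (b ^ 2) ^ 3 ≠ 0)
    (p : Fin 3 × ℤˣ) : planeCoeff a b p 1 = 1 / (a ^ 2 + b ^ 2) / 2 := by
  simp [planeCoeff, circulantSol_one hab]

end Decomposition

lemma contDiff_planeCoeff (a b : ℝ) (p : Fin 3 × ℤˣ) {n : WithTop ℕ∞} :
    ContDiff ℝ n (planeCoeff a b p) := by
  have (i j : Fin 3) : ContDiff ℝ n (fun S : Matrix (Fin 3) (Fin 3) ℝ => S i j) :=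
    contDiff_apply_apply ℝ ℝ i j
  unfold planeCoeff circulantSol
  simp only [diag_apply, Units.smul_def]
  fun_prop

lemma norm_le_fnorm (A : Matrix (Fin 3) (Fin 3) ℝ) : ‖A‖ ≤ fnorm A := by
  refine (Matrix.norm_le_iff (Real.sqrt_nonneg _)).2 fun i j => Real.abs_le_sqrt ?_
  calc A i j ^ 2 ≤ ∑ j, A i j ^ 2 :=
        Finset.single_le_sum (fun _ _ => sq_nonneg _) (Finset.mem_univ j)
    _ ≤ ∑ i, ∑ j, A i j ^ 2 :=
        Finset.single_le_sum (f := fun i => ∑ j, A i j ^ 2)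
          (fun _ _ => Finset.sum_nonneg fun _ _ => sq_nonneg _) (Finset.mem_univ i)

lemma exists_forall_fnorm_sub_lt_of_eventually {A : Matrix (Fin 3) (Fin 3) ℝ}
    {P : Matrix (Fin 3) (Fin 3) ℝ → Prop} (h : ∀ᶠ S in nhds A, P S) :
    ∃ ε > 0, ∀ S, fnorm (S - A) < ε → P S := by
  obtain ⟨ε, hε, hP⟩ := Metric.eventually_nhds_iff.1 h
  refine ⟨ε, hε, fun S hS => hP ?_⟩
  rw [dist_eq_norm]
  exact (norm_le_fnorm _).trans_lt hS

lemma exists_forall_planeCoeff_pos {a : ℝ} (ha : a ≠ 0) (b : ℝ) :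
    ∃ ε > 0, ∀ S, fnorm (S - 1) < ε → ∀ p, 0 < planeCoeff a b p S := by
  refine exists_forall_fnorm_sub_lt_of_eventually (Filter.eventually_all.2 fun p => ?_)
  have hpos : 0 < planeCoeff a b p 1 := by
    rw [planeCoeff_one (by positivity)]
    positivity
  exact (contDiff_planeCoeff a b p (n := 0)).continuous.continuousAt.eventually_const_lt hpos

theorem second_geometric_lemma :
    ∃ (Λu : Finset (Fin 3 → ℝ)) (k₁ k₂ : (Fin 3 → ℝ) → (Fin 3 → ℝ)) (εu : ℝ)
      (γ : (Fin 3 → ℝ) → Matrix (Fin 3) (Fin 3) ℝ → ℝ),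
      0 < εu ∧ Λu.Nonempty ∧
      -- Λ_u is disjoint from Λ_B
      (∀ k ∈ Λu, k ∉ ΛBset) ∧
      -- the elements of Λ_u are rational unit vectors
      (∀ k ∈ Λu, (∀ i, ∃ q : ℚ, k i = (q : ℝ)) ∧ ∑ i, k i ^ 2 = 1) ∧
      -- each k ∈ Λ_u comes with an orthonormal basis (k, k₁, k₂)
      (∀ k ∈ Λu, IsONBasis k (k₁ k) (k₂ k)) ∧
      -- the γ_(k) are smooth on the ball of radius ε_u around the identity
      (∀ k ∈ Λu, ContDiffOn ℝ (⊤ : ℕ∞) (γ k) {S | fnorm (S - 1) < εu}) ∧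
      -- the γ_(k) are strictly positive on the symmetric matrices in that ball
      (∀ k ∈ Λu, ∀ S : Matrix (Fin 3) (Fin 3) ℝ, Sᵀ = S → fnorm (S - 1) < εu → 0 < γ k S) ∧
      -- the decomposition identity on symmetric matrices with |S − Id| < ε_u
      (∀ S : Matrix (Fin 3) (Fin 3) ℝ, Sᵀ = S → fnorm (S - 1) < εu →
        S = ∑ k ∈ Λu, (γ k S) ^ 2 • vecMulVec (k₁ k) (k₁ k)) := by
  let k : Fin 3 × ℤˣ → Fin 3 → ℝ := planeVec (4 / 5) (3 / 5)
  have hk : Function.Injective k := planeVec_injective _ (by norm_num)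
  have hON (p) : IsONBasis (k p) (planeVec (3 / 5) (-(4 / 5)) p) (Pi.single (p.1 + 2) 1) :=
    isONBasis_planeVec (by norm_num) p
  obtain ⟨ε, hε, hpos⟩ :=
    exists_forall_planeCoeff_pos (a := 3 / 5) (by norm_num) (-(4 / 5))
  refine ⟨Finset.univ.map ⟨k, hk⟩, k.extend (planeVec (3 / 5) (-(4 / 5))) 0,
    k.extend (fun p => Pi.single (p.1 + 2) 1) 0, ε,
    k.extend (fun p S => √(planeCoeff (3 / 5) (-(4 / 5)) p S)) 0, hε, by simp, ?_⟩
  simp only [Finset.forall_mem_map, Finset.sum_map, Function.Embedding.coeFn_mk, hk.extend_apply]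
  refine ⟨fun p _ => ?_, fun p _ => ⟨fun i => ?_, (hON p).1⟩, fun p _ => hON p, fun p _ => ?_,
    fun p _ S _ hS => Real.sqrt_pos.2 (hpos S hS p), fun S hS hSε => ?_⟩
  · exact planeVec_notMem_ΛBset (by norm_num) (by norm_num) (by norm_num) (by norm_num) p
  · exact ⟨planeVec (4 / 5) (3 / 5) p i, by simp [k, ratCast_planeVec]⟩
  · exact (contDiff_planeCoeff _ _ p).contDiffOn.sqrt fun S hS => (hpos S hS p).ne'
  · simp only [Real.sq_sqrt (hpos S hSε _).le]
    exact (sum_planeCoeff_smul_vecMulVec two_ne_zero (by norm_num) (by norm_num) (by norm_num)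
      hS).symm

end
end

section
/- There exists a universal constant C_* > 0 with the following property. Fix integers N ≥ 1 and κ ≥ 1 and a real ζ > 1 such that 2π√3 ζ / κ ≤ 1/3 and ζ⁴ (2π√3 ζ)^N / κ^N ≤ 1. Let p ∈ {1, 2}, let f: ℝ³ → ℝ be a 2π-periodic (in each coordinate) function of class C^{N+4} for which there is a constant C_f > 0 with ‖D^j f‖_{L^p(T³)} ≤ C_f ζ^j for all 0 ≤ j ≤ N + 4, and let g: ℝ³ → ℝ be a measurable function that is (2π/κ)-periodic in each coordinate with g ∈ L^p(T³). Then ‖f g‖_{L^p(T³)} ≤ C_f C_* ‖g‖_{L^p(T³)}. -/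
/-!
STATEMENT 12: The L^p decorrelation lemma: there is a universal constant C_* such that
for N, κ ≥ 1, ζ > 1 with 2π√3 ζ/κ ≤ 1/3 and ζ⁴(2π√3 ζ)^N/κ^N ≤ 1, p ∈ {1,2},
any 2π-periodic f ∈ C^{N+4} with ‖D^j f‖_{L^p} ≤ C_f ζ^j for 0 ≤ j ≤ N+4, and any
(2π/κ)-periodic g ∈ L^p(T³), one has ‖fg‖_{L^p(T³)} ≤ C_f C_* ‖g‖_{L^p(T³)}.
-/

noncomputable section

open MeasureTheory Real
open scoped ENNReal

/-- The fundamental domain [−π,π]³ of the torus T³. -/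
def dom : Set (Fin 3 → ℝ) := Set.Icc (fun _ => -π) (fun _ => π)

/-- A function on ℝ³ is `T`-periodic in each coordinate. -/
def PeriodicWith (T : ℝ) (f : (Fin 3 → ℝ) → ℝ) : Prop :=
  ∀ (x : Fin 3 → ℝ) (i : Fin 3), f (x + T • (Pi.single i 1 : Fin 3 → ℝ)) = f x

/-!
On an interval of length `h` the fundamental theorem of calculus and Jensen's inequality give
`h * ‖φ t‖ ^ q ≤ ∫ (‖φ‖ + h * ‖φ'‖) ^ q`. Integrate this against an `h`-periodic weight `w` and sum
over the periods: all of them carry the same mass of `w`, so `w` may be replaced by its mean at the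
price of replacing `‖φ‖` by `‖φ‖ + h * ‖φ'‖`. Doing this in each coordinate direction in turn
replaces `|g| ^ p` by its mean over the whole box. Each direction costs one derivative of `f`,
scaled by `h`, and a factor `2`. In the theorem `h = 2π / κ` and `h * ζ ≤ 1`, so the growth `ζ ^ j`
of the derivatives is absorbed by `h ^ j`, and three directions give the constant `2 ^ 3`.
-/

section General

lemma rpow_lintegral_le {α : Type*} [MeasurableSpace α] {μ : Measure α} {u : α → ℝ≥0∞}
    (hu : AEMeasurable u μ) {q : ℝ} (hq : 1 ≤ q) :
    (∫⁻ x, u x ∂μ) ^ q ≤ μ Set.univ ^ (q - 1) * ∫⁻ x, u x ^ q ∂μ := by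
  have hq0 : 0 < q := zero_lt_one.trans_le hq
  have holder := ENNReal.rpow_le_rpow
    (eLpNorm'_le_eLpNorm'_mul_rpow_measure_univ one_pos hq hu.aestronglyMeasurable) hq0.le
  rw [ENNReal.mul_rpow_of_nonneg _ _ hq0.le, ← lintegral_rpow_enorm_eq_rpow_eLpNorm' hq0,
    ← ENNReal.rpow_mul, sub_mul, one_div_mul_cancel hq0.ne', div_one, one_mul, mul_comm] at holder
  simpa [eLpNorm'] using holder

section IteratedFDeriv

variable {V E : Type*} [NormedAddCommGroup V] [NormedSpace ℝ V] [NormedAddCommGroup E]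
  [NormedSpace ℝ E] {f : V → E} {j : ℕ}

lemma enorm_iteratedFDeriv_fderiv_apply_le (hf : ContDiff ℝ (j + 1) f) (v x : V) :
    ‖iteratedFDeriv ℝ j (fun y => fderiv ℝ f y v) x‖ₑ
      ≤ ‖v‖ₑ * ‖iteratedFDeriv ℝ (j + 1) f x‖ₑ := by
  have h := norm_iteratedFDeriv_clm_apply_const (c := v) (n := j)
    (hf.fderiv_right (m := j) le_rfl).contDiffAt (x := x) le_rfl
  rw [norm_iteratedFDeriv_fderiv] at h
  simp only [← ofReal_norm]
  rw [← ENNReal.ofReal_mul (norm_nonneg v)]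
  exact ENNReal.ofReal_le_ofReal h

lemma lintegral_enorm_pow_mul_enorm_iteratedFDeriv_fderiv_le [MeasurableSpace V]
    (hf : ContDiff ℝ (j + 1) f) (v : V) {q : ℝ} (hq : 0 ≤ q) (μ : Measure V) :
    ∫⁻ x, (‖v‖ₑ ^ j * ‖iteratedFDeriv ℝ j (fun y => fderiv ℝ f y v) x‖ₑ) ^ q ∂μ
      ≤ ∫⁻ x, (‖v‖ₑ ^ (j + 1) * ‖iteratedFDeriv ℝ (j + 1) f x‖ₑ) ^ q ∂μ := by
  refine lintegral_mono fun x => ENNReal.rpow_le_rpow ?_ hq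
  rw [pow_succ, mul_assoc]
  exact mul_le_mul_right (enorm_iteratedFDeriv_fderiv_apply_le hf v x) _

end IteratedFDeriv

lemma setLIntegral_Ioc_add_right (w : ℝ → ℝ≥0∞) (a b c : ℝ) :
    ∫⁻ t in Set.Ioc a b, w (t + c) = ∫⁻ t in Set.Ioc (a + c) (b + c), w t := by
  simpa using (measurePreserving_add_right volume c).setLIntegral_comp_preimage_emb
    (measurableEmbedding_addRight c) w (Set.Ioc (a + c) (b + c))

lemma setLIntegral_Ioc_add_nat_mul (w : ℝ → ℝ≥0∞) (a : ℝ) {h : ℝ} (hh : 0 ≤ h) (n : ℕ) :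
    ∫⁻ t in Set.Ioc a (a + n * h), w t
      = ∑ k ∈ Finset.range n, ∫⁻ t in Set.Ioc (a + k * h) (a + k * h + h), w t := by
  induction n with
  | zero => simp
  | succ n ih =>
    have hn : 0 ≤ n * h := by positivity
    rw [Finset.sum_range_succ, ← ih, ← lintegral_union measurableSet_Ioc
      (Set.Ioc_disjoint_Ioc_of_le le_rfl), Set.Ioc_union_Ioc_eq_Ioc (by linarith) (by linarith)]
    push_cast
    ring_nf

lemma setLIntegral_Ioc_nat_mul_add_of_periodic {w : ℝ → ℝ≥0∞} {h : ℝ}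
    (hw : Function.Periodic w h) (a : ℝ) (k : ℕ) :
    ∫⁻ t in Set.Ioc (a + k * h) (a + k * h + h), w t = ∫⁻ t in Set.Ioc a (a + h), w t := by
  rw [add_right_comm, ← setLIntegral_Ioc_add_right]
  simp only [hw.nat_mul k _]

lemma setLIntegral_Ioc_add_nat_mul_of_periodic {w : ℝ → ℝ≥0∞} {h : ℝ}
    (hw : Function.Periodic w h) (hh : 0 ≤ h) (a : ℝ) (n : ℕ) :
    ∫⁻ t in Set.Ioc a (a + n * h), w t = n * ∫⁻ t in Set.Ioc a (a + h), w t := by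
  simp [setLIntegral_Ioc_add_nat_mul w a hh, setLIntegral_Ioc_nat_mul_add_of_periodic hw]

/-- The `i`-th one-dimensional factor of Lebesgue measure on the box with corners `a` and `b`.
The intervals are half-open so that the periods of a weight tile them exactly. -/
def boxMarginal {ι : Type*} (a b : ι → ℝ) (i : ι) : Measure ℝ :=
  volume.restrict (Set.Ioc (a i) (b i))

instance {ι : Type*} (a b : ι → ℝ) (i : ι) : SigmaFinite (boxMarginal a b i) := by
  unfold boxMarginal; infer_instance

lemma volume_restrict_Icc_eq_pi {ι : Type*} [Fintype ι] (a b : ι → ℝ) :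
    volume.restrict (Set.Icc a b) = Measure.pi (boxMarginal a b) := by
  unfold boxMarginal
  rw [← Measure.restrict_pi_pi, ← volume_pi]
  exact Measure.restrict_congr_set Measure.univ_pi_Ioc_ae_eq_Icc.symm

end General

section OneDim

variable {E : Type*} [NormedAddCommGroup E] [NormedSpace ℝ E] [CompleteSpace E] {φ : ℝ → E}

lemma enorm_le_enorm_add_setLIntegral_deriv (hφ : ContDiff ℝ 1 φ) {a b s t : ℝ}
    (hs : s ∈ Set.Icc a b) (ht : t ∈ Set.Icc a b) :
    ‖φ t‖ₑ ≤ ‖φ s‖ₑ + ∫⁻ r in Set.Ioc a b, ‖deriv φ r‖ₑ := by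
  have ftc : ∫ r in s..t, deriv φ r = φ t - φ s :=
    intervalIntegral.integral_deriv_eq_sub' φ rfl
      (fun r _ => (hφ.differentiable one_ne_zero) r) (hφ.continuous_deriv le_rfl).continuousOn
  calc ‖φ t‖ₑ = ‖φ s + ∫ r in s..t, deriv φ r‖ₑ := by rw [ftc, add_sub_cancel]
    _ ≤ ‖φ s‖ₑ + ‖∫ r in s..t, deriv φ r‖ₑ := enorm_add_le _ _
    _ ≤ ‖φ s‖ₑ + ∫⁻ r in Set.Ioc a b, ‖deriv φ r‖ₑ := by
      gcongr
      rw [← ofReal_norm, intervalIntegral.norm_intervalIntegral_eq, ofReal_norm]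
      refine (enorm_integral_le_lintegral_enorm _).trans (lintegral_mono_set ?_)
      exact Set.Ioc_subset_Ioc (le_min hs.1 ht.1) (max_le hs.2 ht.2)

lemma ofReal_mul_enorm_le_setLIntegral (hφ : ContDiff ℝ 1 φ) {a b t : ℝ} (ht : t ∈ Set.Icc a b) :
    ENNReal.ofReal (b - a) * ‖φ t‖ₑ
      ≤ ∫⁻ s in Set.Ioc a b, (‖φ s‖ₑ + ENNReal.ofReal (b - a) * ‖deriv φ s‖ₑ) := by
  calc ENNReal.ofReal (b - a) * ‖φ t‖ₑ = ∫⁻ _ in Set.Ioc a b, ‖φ t‖ₑ := by simp [mul_comm]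
    _ ≤ ∫⁻ s in Set.Ioc a b, (‖φ s‖ₑ + ∫⁻ r in Set.Ioc a b, ‖deriv φ r‖ₑ) :=
      setLIntegral_mono' measurableSet_Ioc fun s hs =>
        enorm_le_enorm_add_setLIntegral_deriv hφ (Set.Ioc_subset_Icc_self hs) ht
    _ = _ := by
      have mφ : Measurable fun s => ‖φ s‖ₑ := hφ.continuous.enorm.measurable
      rw [lintegral_add_left mφ, lintegral_add_left mφ, lintegral_const_mul' _ _ (by simp)]
      simp [mul_comm]

lemma ofReal_mul_enorm_rpow_le_setLIntegral (hφ : ContDiff ℝ 1 φ) {q : ℝ} (hq : 1 ≤ q)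
    {a b t : ℝ} (ht : t ∈ Set.Ioc a b) :
    ENNReal.ofReal (b - a) * ‖φ t‖ₑ ^ q
      ≤ ∫⁻ s in Set.Ioc a b, (‖φ s‖ₑ + ENNReal.ofReal (b - a) * ‖deriv φ s‖ₑ) ^ q := by
  set L := ENNReal.ofReal (b - a) with hL
  have hq0 : 0 ≤ q := zero_le_one.trans hq
  have hL0 : L ≠ 0 := by simpa [hL] using ht.1.trans_le ht.2
  have hLtop : L ≠ ∞ := ENNReal.ofReal_ne_top
  have hφ' : Continuous (deriv φ) := hφ.continuous_deriv le_rfl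
  have mu : Measurable fun s => ‖φ s‖ₑ + L * ‖deriv φ s‖ₑ :=
    hφ.continuous.enorm.measurable.add (hφ'.enorm.measurable.const_mul L)
  have jensen := (ENNReal.rpow_le_rpow
    (ofReal_mul_enorm_le_setLIntegral hφ (Set.Ioc_subset_Icc_self ht)) hq0).trans
      (rpow_lintegral_le mu.aemeasurable hq)
  have split : L ^ q = L ^ (q - 1) * L := by
    simpa using ENNReal.rpow_add_of_nonneg (x := L) (q - 1) 1 (sub_nonneg.2 hq) zero_le_one
  rw [Measure.restrict_apply_univ, Real.volume_Ioc, ENNReal.mul_rpow_of_nonneg _ _ hq0, ← hL,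
    split, mul_assoc] at jensen
  exact (ENNReal.mul_le_mul_iff_right (by simp [hL0, hLtop])
    (ENNReal.rpow_ne_top_of_nonneg (sub_nonneg.2 hq) hLtop)).1 jensen

lemma ofReal_mul_setLIntegral_enorm_rpow_mul_le (hφ : ContDiff ℝ 1 φ) {q : ℝ} (hq : 1 ≤ q)
    {w : ℝ → ℝ≥0∞} (hw : Measurable w) (a b : ℝ) :
    ENNReal.ofReal (b - a) * ∫⁻ t in Set.Ioc a b, ‖φ t‖ₑ ^ q * w t
      ≤ (∫⁻ s in Set.Ioc a b, (‖φ s‖ₑ + ENNReal.ofReal (b - a) * ‖deriv φ s‖ₑ) ^ q)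
        * ∫⁻ t in Set.Ioc a b, w t := by
  rw [← lintegral_const_mul' _ _ ENNReal.ofReal_ne_top, ← lintegral_const_mul _ hw]
  refine setLIntegral_mono' measurableSet_Ioc fun t ht => ?_
  rw [← mul_assoc]
  gcongr
  exact ofReal_mul_enorm_rpow_le_setLIntegral hφ hq ht

lemma ofReal_mul_setLIntegral_enorm_rpow_mul_le_of_periodic (hφ : ContDiff ℝ 1 φ) {q : ℝ}
    (hq : 1 ≤ q) {h : ℝ} (hh : 0 ≤ h) {w : ℝ → ℝ≥0∞} (hw : Measurable w)
    (hwh : Function.Periodic w h) (a : ℝ) (n : ℕ) :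
    ENNReal.ofReal (n * h) * ∫⁻ t in Set.Ioc a (a + n * h), ‖φ t‖ₑ ^ q * w t
      ≤ (∫⁻ s in Set.Ioc a (a + n * h), (‖φ s‖ₑ + ENNReal.ofReal h * ‖deriv φ s‖ₑ) ^ q)
        * ∫⁻ t in Set.Ioc a (a + n * h), w t := by
  have cell (k : ℕ) := ofReal_mul_setLIntegral_enorm_rpow_mul_le hφ hq hw
    (a + k * h) (a + k * h + h)
  simp only [add_sub_cancel_left, setLIntegral_Ioc_nat_mul_add_of_periodic hwh a] at cell
  rw [setLIntegral_Ioc_add_nat_mul_of_periodic hwh hh,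
    setLIntegral_Ioc_add_nat_mul (fun t => ‖φ t‖ₑ ^ q * w t) a hh,
    setLIntegral_Ioc_add_nat_mul (fun s => (‖φ s‖ₑ + ENNReal.ofReal h * ‖deriv φ s‖ₑ) ^ q) a hh,
    ENNReal.ofReal_mul n.cast_nonneg, ENNReal.ofReal_natCast, mul_assoc, mul_left_comm _ (n : ℝ≥0∞),
    Finset.mul_sum, Finset.sum_mul]
  exact mul_le_mul_right (Finset.sum_le_sum fun k _ => cell k) _

end OneDim

section Box

variable {ι : Type*} [DecidableEq ι]

lemma update_add_eq_update_add_single (x : ι → ℝ) (i : ι) (t h : ℝ) :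
    Function.update x i (t + h) = Function.update x i t + Pi.single i h := by
  ext k
  by_cases hk : k = i
  · subst hk; simp
  · simp [hk]

lemma update_add_single_of_ne (x : ι → ℝ) {i j : ι} (hij : i ≠ j) (t h : ℝ) :
    Function.update (x + Pi.single j h) i t = Function.update x i t + Pi.single j h := by
  ext k
  by_cases hk : k = i
  · subst hk; simp [hij]
  · simp [hk]

lemma periodic_lmarginal_singleton {P : (ι → ℝ) → ℝ≥0∞} {h : ℝ} {j : ι}
    (hP : Function.Periodic P (Pi.single j h)) (μ : ι → Measure ℝ) (i : ι) :
    Function.Periodic (∫⋯∫⁻_{i}, P ∂μ) (Pi.single j h) := by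
  intro x
  rcases eq_or_ne i j with rfl | hij
  · refine lmarginal_congr μ P fun k hk => ?_
    simp [Finset.mem_singleton.not.1 hk]
  · simp only [lmarginal_singleton, update_add_single_of_ne x hij, hP _]

variable [Fintype ι] {E : Type*} [NormedAddCommGroup E] [NormedSpace ℝ E] [CompleteSpace E]

lemma ofReal_mul_lintegral_le_lintegral_mul_lmarginal {f : (ι → ℝ) → E} (hf : ContDiff ℝ 1 f)
    {q : ℝ} (hq : 1 ≤ q) {h : ℝ} (hh : 0 ≤ h) {P : (ι → ℝ) → ℝ≥0∞} (mP : Measurable P) {i : ι}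
    (hP : Function.Periodic P (Pi.single i h)) {a b : ι → ℝ} {n : ℕ} (hab : b i = a i + n * h) :
    ENNReal.ofReal (b i - a i) * ∫⁻ x, ‖f x‖ₑ ^ q * P x ∂Measure.pi (boxMarginal a b)
      ≤ ∫⁻ x, (‖f x‖ₑ + ‖fderiv ℝ f x (Pi.single i h)‖ₑ) ^ q
          * (∫⋯∫⁻_{i}, P ∂boxMarginal a b) x ∂Measure.pi (boxMarginal a b) := by
  have mf : Measurable fun x => ‖f x‖ₑ := hf.continuous.enorm.measurable
  have mdf : Measurable fun x => ‖fderiv ℝ f x (Pi.single i h)‖ₑ :=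
    ((hf.continuous_fderiv one_ne_zero).clm_apply continuous_const).enorm.measurable
  have mPi : Measurable (∫⋯∫⁻_{i}, P ∂boxMarginal a b) := mP.lmarginal _
  rw [← lintegral_const_mul' _ _ ENNReal.ofReal_ne_top]
  refine lintegral_le_of_lmarginal_le {i} (by fun_prop) (by fun_prop) fun x => ?_
  have mx : Measurable fun t : ℝ => Function.update x i t := measurable_update x
  have partial_deriv (t : ℝ) : ENNReal.ofReal h * ‖deriv (fun t => f (Function.update x i t)) t‖ₑ
      = ‖fderiv ℝ f (Function.update x i t) (Pi.single i h)‖ₑ := by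
    have hd : HasDerivAt (fun t => f (Function.update x i t))
        (fderiv ℝ f (Function.update x i t) (Pi.single i 1)) t :=
      (hf.differentiable one_ne_zero _).hasFDerivAt.comp_hasDerivAt t (hasDerivAt_update x i t)
    rw [hd.deriv, ← Real.enorm_of_nonneg hh, ← enorm_smul, ← map_smul, ← Pi.single_smul,
      smul_eq_mul, mul_one]
  have slice := ofReal_mul_setLIntegral_enorm_rpow_mul_le_of_periodic
    (hf.comp (contDiff_update 1 x i)) hq hh (mP.comp mx)
    (fun t => by simp only [Function.comp, update_add_eq_update_add_single, hP _]) (a i) n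
  simp only [Function.comp_def, partial_deriv, ← hab] at slice
  have mu : Measurable fun t => (‖f (Function.update x i t)‖ₑ
      + ‖fderiv ℝ f (Function.update x i t) (Pi.single i h)‖ₑ) ^ q :=
    ((mf.comp mx).add (mdf.comp mx)).pow_const q
  simp only [lmarginal_singleton, Function.update_idem]
  rw [lintegral_const_mul' _ _ ENNReal.ofReal_ne_top,
    lintegral_mul_const _ mu, sub_eq_of_eq_add' hab]
  exact slice

lemma ofReal_mul_lintegral_le_two_rpow_mul_add {f : (ι → ℝ) → E} (hf : ContDiff ℝ 1 f)
    {q : ℝ} (hq : 1 ≤ q) {h : ℝ} (hh : 0 ≤ h) {P : (ι → ℝ) → ℝ≥0∞} (mP : Measurable P) {i : ι}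
    (hP : Function.Periodic P (Pi.single i h)) {a b : ι → ℝ} {n : ℕ} (hab : b i = a i + n * h) :
    ENNReal.ofReal (b i - a i) * ∫⁻ x, ‖f x‖ₑ ^ q * P x ∂Measure.pi (boxMarginal a b)
      ≤ 2 ^ (q - 1)
        * (∫⁻ x, ‖f x‖ₑ ^ q * (∫⋯∫⁻_{i}, P ∂boxMarginal a b) x ∂Measure.pi (boxMarginal a b)
          + ∫⁻ x, ‖fderiv ℝ f x (Pi.single i h)‖ₑ ^ q * (∫⋯∫⁻_{i}, P ∂boxMarginal a b) x
            ∂Measure.pi (boxMarginal a b)) := by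
  have mf : Measurable fun x => ‖f x‖ₑ := hf.continuous.enorm.measurable
  have mdf : Measurable fun x => ‖fderiv ℝ f x (Pi.single i h)‖ₑ :=
    ((hf.continuous_fderiv one_ne_zero).clm_apply continuous_const).enorm.measurable
  have mPi : Measurable (∫⋯∫⁻_{i}, P ∂boxMarginal a b) := mP.lmarginal _
  refine (ofReal_mul_lintegral_le_lintegral_mul_lmarginal hf hq hh mP hP hab).trans ?_
  rw [← lintegral_add_left (by fun_prop), ← lintegral_const_mul _ (by fun_prop)]
  refine lintegral_mono fun x => ?_
  rw [← add_mul, ← mul_assoc]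
  exact mul_le_mul_left (ENNReal.rpow_add_le_mul_rpow_add_rpow _ _ hq) _

lemma prod_ofReal_mul_lintegral_le {q : ℝ} (hq : 1 ≤ q) {h : ℝ} (hh : 0 ≤ h) {a b : ι → ℝ}
    {n : ι → ℕ} (hab : ∀ i, b i = a i + n i * h) {B c : ℝ≥0∞} (s : Finset ι)
    {f : (ι → ℝ) → E} (hf : ContDiff ℝ s.card f)
    (hB : ∀ j ≤ s.card, ∫⁻ x, (ENNReal.ofReal h ^ j * ‖iteratedFDeriv ℝ j f x‖ₑ) ^ q
      ∂Measure.pi (boxMarginal a b) ≤ B)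
    {P : (ι → ℝ) → ℝ≥0∞} (mP : Measurable P) (hP : ∀ i, Function.Periodic P (Pi.single i h))
    (hc : ∫⋯∫⁻_s, P ∂boxMarginal a b = fun _ => c) :
    (∏ i ∈ s, ENNReal.ofReal (b i - a i)) * ∫⁻ x, ‖f x‖ₑ ^ q * P x ∂Measure.pi (boxMarginal a b)
      ≤ (2 ^ q) ^ s.card * (B * c) := by
  induction s using Finset.induction_on generalizing f P with
  | empty =>
    have mf : Measurable fun x => ‖f x‖ₑ := hf.continuous.enorm.measurable
    rw [lmarginal_empty] at hc
    simp only [hc, Finset.prod_empty, Finset.card_empty, pow_zero, one_mul]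
    rw [lintegral_mul_const _ (by fun_prop)]
    gcongr
    simpa [← ofReal_norm] using hB 0 le_rfl
  | insert i s hi ih =>
    rw [Finset.card_insert_of_notMem hi] at hf hB ⊢
    set Q := ∫⋯∫⁻_{i}, P ∂boxMarginal a b
    set f' := fun x => fderiv ℝ f x (Pi.single i h)
    have hf' : ContDiff ℝ s.card f' := (hf.fderiv_right le_rfl).clm_apply contDiff_const
    have hB' (j : ℕ) (hj : j ≤ s.card) :
        ∫⁻ x, (ENNReal.ofReal h ^ j * ‖iteratedFDeriv ℝ j f' x‖ₑ) ^ q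
          ∂Measure.pi (boxMarginal a b) ≤ B := by
      have enorm_single : ‖(Pi.single i h : ι → ℝ)‖ₑ = ENNReal.ofReal h := by
        rw [Pi.enorm_single, Real.enorm_of_nonneg hh]
      rw [← enorm_single] at hB ⊢
      exact (lintegral_enorm_pow_mul_enorm_iteratedFDeriv_fderiv_le
        (hf.of_le (by norm_cast; omega)) _ (zero_le_one.trans hq) _).trans (hB (j + 1) (by omega))
    have mQ : Measurable Q := mP.lmarginal _
    have hQh (j : ι) := periodic_lmarginal_singleton (hP j) (boxMarginal a b) i
    rw [lmarginal_insert' _ mP hi, ← lmarginal_singleton] at hc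
    have two_rpow : (2 : ℝ≥0∞) ^ (q - 1) * 2 = 2 ^ q := by
      simpa using (ENNReal.rpow_add_of_nonneg (x := 2) (q - 1) 1 (sub_nonneg.2 hq) zero_le_one).symm
    calc (∏ i ∈ insert i s, ENNReal.ofReal (b i - a i))
          * ∫⁻ x, ‖f x‖ₑ ^ q * P x ∂Measure.pi (boxMarginal a b)
        ≤ (∏ i ∈ s, ENNReal.ofReal (b i - a i)) * (2 ^ (q - 1)
          * (∫⁻ x, ‖f x‖ₑ ^ q * Q x ∂Measure.pi (boxMarginal a b)
            + ∫⁻ x, ‖f' x‖ₑ ^ q * Q x ∂Measure.pi (boxMarginal a b))) := by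
          rw [Finset.prod_insert hi, mul_comm (ENNReal.ofReal _), mul_assoc]
          exact mul_le_mul_right (ofReal_mul_lintegral_le_two_rpow_mul_add
            (hf.of_le (by norm_cast; omega)) hq hh mP (hP i) (hab i)) _
      _ ≤ 2 ^ (q - 1) * ((2 ^ q) ^ s.card * (B * c) + (2 ^ q) ^ s.card * (B * c)) := by
          rw [mul_left_comm, mul_add]
          exact mul_le_mul_right (add_le_add
            (ih (hf.of_le (by norm_cast; omega)) (fun j hj => hB j (by omega)) mQ hQh hc)
            (ih hf' hB' mQ hQh hc)) _
      _ = (2 ^ q) ^ (s.card + 1) * (B * c) := by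
          rw [← two_mul, ← mul_assoc, two_rpow, pow_succ', mul_assoc]

lemma volume_Icc_mul_eLpNorm_smul_rpow_le {q : NNReal} (hq : 1 ≤ q) {h : ℝ} (hh : 0 ≤ h)
    {a b : ι → ℝ} {n : ι → ℕ} (hab : ∀ i, b i = a i + n i * h) {f : (ι → ℝ) → E}
    (hf : ContDiff ℝ (Fintype.card ι) f) {C : ℝ≥0∞}
    (hC : ∀ j ≤ Fintype.card ι, ENNReal.ofReal h ^ j
      * eLpNorm (iteratedFDeriv ℝ j f) q (volume.restrict (Set.Icc a b)) ≤ C)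
    {g : (ι → ℝ) → ℝ} (mg : Measurable g) (hg : ∀ i, Function.Periodic g (Pi.single i h)) :
    volume (Set.Icc a b)
        * eLpNorm (fun x => g x • f x) q (volume.restrict (Set.Icc a b)) ^ (q : ℝ)
      ≤ (2 ^ Fintype.card ι * C * eLpNorm g q (volume.restrict (Set.Icc a b))) ^ (q : ℝ) := by
  have hq0 : q ≠ 0 := (zero_lt_one.trans_le hq).ne'
  have mul_rpow (x y : ℝ≥0∞) : (x * y) ^ (q : ℝ) = x ^ (q : ℝ) * y ^ (q : ℝ) :=
    ENNReal.mul_rpow_of_nonneg x y q.coe_nonneg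
  have deriv_bound (j : ℕ) (hj : j ≤ Fintype.card ι) :
      ∫⁻ x, (ENNReal.ofReal h ^ j * ‖iteratedFDeriv ℝ j f x‖ₑ) ^ (q : ℝ)
        ∂Measure.pi (boxMarginal a b) ≤ C ^ (q : ℝ) := by
    simp only [mul_rpow]
    rw [lintegral_const_mul' _ _ (by finiteness), ← eLpNorm_nnreal_pow_eq_lintegral hq0,
      ← mul_rpow, ← volume_restrict_Icc_eq_pi]
    exact ENNReal.rpow_le_rpow (hC j hj) q.coe_nonneg
  have main := prod_ofReal_mul_lintegral_le (NNReal.one_le_coe.2 hq) hh hab Finset.univ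
    (by simpa using hf) (by simpa using deriv_bound) (mg.enorm.pow_const (q : ℝ))
    (fun i x => by simp only [hg i x]) lmarginal_univ
  have two_pow : ((2 : ℝ≥0∞) ^ Fintype.card ι) ^ (q : ℝ) = (2 ^ (q : ℝ)) ^ Fintype.card ι := by
    simp only [← ENNReal.rpow_natCast, ← ENNReal.rpow_mul, mul_comm]
  rw [mul_rpow, mul_rpow, two_pow, mul_assoc, eLpNorm_nnreal_pow_eq_lintegral hq0,
    eLpNorm_nnreal_pow_eq_lintegral hq0, volume_restrict_Icc_eq_pi, Real.volume_Icc_pi]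
  simpa only [enorm_smul, mul_rpow, mul_comm, Finset.card_univ] using main

end Box

/-- At `p = ∞` the exponent `1 / p.toReal` is `1 / 0 = 0`, so the volume factor is `1`. -/
theorem Lp_decorrelation_general {ι : Type*} [Fintype ι] [DecidableEq ι] {E : Type*}
    [NormedAddCommGroup E] [NormedSpace ℝ E] [CompleteSpace E] {p : ℝ≥0∞} (hp : 1 ≤ p)
    {h : ℝ} (hh : 0 ≤ h) {a b : ι → ℝ} {n : ι → ℕ} (hab : ∀ i, b i = a i + n i * h)
    {f : (ι → ℝ) → E} (hf : ContDiff ℝ (Fintype.card ι) f) {C : ℝ≥0∞}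
    (hC : ∀ j ≤ Fintype.card ι, ENNReal.ofReal h ^ j
      * eLpNorm (iteratedFDeriv ℝ j f) p (volume.restrict (Set.Icc a b)) ≤ C)
    {g : (ι → ℝ) → ℝ} (mg : Measurable g) (hg : ∀ i, Function.Periodic g (Pi.single i h)) :
    volume (Set.Icc a b) ^ (1 / p.toReal)
        * eLpNorm (fun x => g x • f x) p (volume.restrict (Set.Icc a b))
      ≤ 2 ^ Fintype.card ι * C * eLpNorm g p (volume.restrict (Set.Icc a b)) := by
  rcases eq_or_ne p ∞ with rfl | hp'
  · have f_bound : eLpNorm f ∞ (volume.restrict (Set.Icc a b)) ≤ C := by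
      rw [← eLpNorm_congr_norm_ae (ae_of_all _ fun x => norm_iteratedFDeriv_zero (𝕜 := ℝ) (x := x))]
      simpa only [pow_zero, one_mul] using hC 0 (Nat.zero_le _)
    rw [ENNReal.toReal_top, div_zero, ENNReal.rpow_zero, one_mul]
    refine (eLpNorm_smul_le_eLpNorm_top_mul_eLpNorm ∞ hf.continuous.aestronglyMeasurable g).trans ?_
    rw [mul_comm]
    exact mul_le_mul_left (f_bound.trans (le_mul_of_one_le_left' (one_le_pow₀ one_le_two))) _
  · lift p to NNReal using hp'
    rw [ENNReal.one_le_coe_iff] at hp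
    have hp0 : 0 < (p : ℝ) := zero_lt_one.trans_le hp
    rw [← ENNReal.rpow_le_rpow_iff hp0, ENNReal.coe_toReal, ENNReal.mul_rpow_of_nonneg _ _ hp0.le,
      ← ENNReal.rpow_mul, one_div_mul_cancel hp0.ne', ENNReal.rpow_one]
    exact volume_Icc_mul_eLpNorm_smul_rpow_le hp hh hab hf hC mg hg

section Torus

lemma one_le_volume_dom_rpow {r : ℝ} (hr : 0 ≤ r) : 1 ≤ volume dom ^ r := by
  have one_le_volume : 1 ≤ volume dom := by
    rw [dom, Real.volume_Icc_pi]
    exact Finset.one_le_prod' fun i _ => ENNReal.one_le_ofReal.2 (by linarith [pi_gt_three])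
  simpa using ENNReal.rpow_le_rpow one_le_volume hr

lemma PeriodicWith.periodic {T : ℝ} {g : (Fin 3 → ℝ) → ℝ} (hg : PeriodicWith T g) (i : Fin 3) :
    Function.Periodic g (Pi.single i T) := fun x => by
  simpa [← Pi.single_smul] using hg x i

lemma two_pi_div_mul_le {k z : ℝ} (hk : 0 ≤ k) (hz : 0 ≤ z) :
    2 * π / k * z ≤ 2 * π * √3 * z / k := by
  have one_le_sqrt : 1 ≤ √3 := Real.one_le_sqrt.2 (by norm_num)
  calc 2 * π / k * z ≤ √3 * (2 * π / k * z) := le_mul_of_one_le_left (by positivity) one_le_sqrt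
    _ = 2 * π * √3 * z / k := by ring

lemma ofReal_pow_mul_ofReal_mul_pow_le {h z c : ℝ} (hh : 0 ≤ h) (hz : 0 ≤ z) (hhz : h * z ≤ 1)
    (hc : 0 ≤ c) (j : ℕ) :
    ENNReal.ofReal h ^ j * ENNReal.ofReal (c * z ^ j) ≤ ENNReal.ofReal c := by
  rw [← ENNReal.ofReal_pow hh, ← ENNReal.ofReal_mul (by positivity)]
  refine ENNReal.ofReal_le_ofReal ?_
  calc h ^ j * (c * z ^ j) = c * (h * z) ^ j := by ring
    _ ≤ c := mul_le_of_le_one_right hc (pow_le_one₀ (by positivity) hhz)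

end Torus

theorem Lp_decorrelation :
    ∃ Cstar : ℝ, 0 < Cstar ∧
      ∀ (N κ : ℕ), 1 ≤ N → 1 ≤ κ →
      ∀ ζ : ℝ, 1 < ζ →
        2 * π * Real.sqrt 3 * ζ / (κ : ℝ) ≤ 1 / 3 →
        ζ ^ 4 * (2 * π * Real.sqrt 3 * ζ) ^ N / (κ : ℝ) ^ N ≤ 1 →
      ∀ p : ℝ≥0∞, p = 1 ∨ p = 2 →
      ∀ (f : (Fin 3 → ℝ) → ℝ), ContDiff ℝ ((N : ℕ∞) + 4) f → PeriodicWith (2 * π) f →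
      ∀ Cf : ℝ, 0 < Cf →
        (∀ j : ℕ, j ≤ N + 4 →
          eLpNorm (fun x => ‖iteratedFDeriv ℝ j f x‖) p (volume.restrict dom)
            ≤ ENNReal.ofReal (Cf * ζ ^ j)) →
      ∀ g : (Fin 3 → ℝ) → ℝ, Measurable g → PeriodicWith (2 * π / (κ : ℝ)) g →
        eLpNorm g p (volume.restrict dom) < ⊤ →
        eLpNorm (fun x => f x * g x) p (volume.restrict dom)
          ≤ ENNReal.ofReal (Cf * Cstar) * eLpNorm g p (volume.restrict dom) := by
  refine ⟨2 ^ 3, by positivity, ?_⟩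
  intro N κ _ hκ ζ hζ hκζ _ p hp f hf _ Cf hCf hf_deriv g mg hg _
  have hp1 : 1 ≤ p := by rcases hp with rfl | rfl <;> norm_num
  have hh : 0 ≤ 2 * π / κ := by positivity
  have hζ0 : 0 ≤ ζ := by positivity
  have hf3 : ContDiff ℝ 3 f := hf.of_le (le_add_left (by norm_num))
  have hhζ : 2 * π / κ * ζ ≤ 1 :=
    (two_pi_div_mul_le κ.cast_nonneg hζ0).trans (hκζ.trans (by norm_num))
  have sides (_ : Fin 3) : π = -π + κ * (2 * π / κ) := by field_simp; ring
  have deriv_bound (j : ℕ) (hj : j ≤ 3) : ENNReal.ofReal (2 * π / κ) ^ j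
      * eLpNorm (iteratedFDeriv ℝ j f) p (volume.restrict dom) ≤ ENNReal.ofReal Cf := by
    rw [← eLpNorm_norm]
    exact (mul_le_mul_right (hf_deriv j (by omega)) _).trans
      (ofReal_pow_mul_ofReal_mul_pow_le hh hζ0 hhζ hCf.le j)
  calc eLpNorm (fun x => f x * g x) p (volume.restrict dom)
      ≤ volume dom ^ (1 / p.toReal) * eLpNorm (fun x => g x • f x) p (volume.restrict dom) := by
        simpa only [smul_eq_mul, mul_comm (g _)] using
          le_mul_of_one_le_left' (one_le_volume_dom_rpow (by positivity))
    _ ≤ 2 ^ 3 * ENNReal.ofReal Cf * eLpNorm g p (volume.restrict dom) :=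
        Lp_decorrelation_general hp1 hh sides hf3 deriv_bound mg hg.periodic
    _ = ENNReal.ofReal (Cf * 2 ^ 3) * eLpNorm g p (volume.restrict dom) := by
        rw [ENNReal.ofReal_mul hCf.le, mul_comm (2 ^ 3)]; norm_num

end
end

section
/- Let n ≥ 1, let φ ∈ C_c^∞(ℝⁿ) with ∫_{ℝⁿ} φ = 1, and for ℓ > 0 set φ_ℓ(x) = ℓ^{−n} φ(x/ℓ). Then there exists a constant C, depending only on φ and n, such that for all bounded C¹ functions f, g: ℝⁿ → ℝ with bounded gradients and all ℓ > 0, sup_{x ∈ ℝⁿ} | ((fg) * φ_ℓ)(x) − (f * φ_ℓ)(x) (g * φ_ℓ)(x) | ≤ C ℓ² ‖∇f‖_{L^∞} ‖∇g‖_{L^∞}. -/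
/-!
STATEMENT 15: The Constantin–E–Titi double commutator mollification estimate on ℝⁿ:
for a mollifier φ_ℓ(x) = ℓ^{−n} φ(x/ℓ) built from φ ∈ C_c^∞(ℝⁿ) with ∫ φ = 1,
  sup_x |((fg) * φ_ℓ)(x) − (f * φ_ℓ)(x)(g * φ_ℓ)(x)| ≤ C ℓ² ‖∇f‖_{L^∞} ‖∇g‖_{L^∞},
with C depending only on φ and n.
-/

noncomputable section

open MeasureTheory

/-- Convolution of a function with the rescaled mollifier ℓ^{−n} φ(·/ℓ) on ℝⁿ. -/
def mollify (n : ℕ) (φ : (Fin n → ℝ) → ℝ) (ℓ : ℝ) (f : (Fin n → ℝ) → ℝ)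
    (x : Fin n → ℝ) : ℝ :=
  ∫ y : Fin n → ℝ, f (x - y) * ((ℓ ^ n)⁻¹ * φ (ℓ⁻¹ • y))

/-!
As `φ_ℓ` has mass one, the commutator is the covariance of the translates `y ↦ f (x - y)` and
`y ↦ g (x - y)` with respect to the signed density `φ_ℓ`. A covariance does not change when
constants are subtracted, so `f (x - y)` and `g (x - y)` may be replaced by the increments
`f (x - y) - f x` and `g (x - y) - g x`, of size at most `‖y‖ ‖∇f‖_∞` and `‖y‖ ‖∇g‖_∞`. This bounds
the commutator by `‖∇f‖_∞ ‖∇g‖_∞` times moments of `φ_ℓ` of total order two, which scale like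
`ℓ ^ 2`.
-/

open scoped Convolution NNReal

section WeightedCovariance

variable {α : Type*} [MeasurableSpace α] {μ : Measure α} {w u v : α → ℝ}

/-- The covariance `∫ w u v - (∫ w u) (∫ w v)` of `u` and `v` with respect to the density `w`, which
may change sign; it is meant for densities of total mass one. -/
def weightedCovariance (μ : Measure α) (w u v : α → ℝ) : ℝ :=
  ∫ y, w y * (u y * v y) ∂μ - (∫ y, w y * u y ∂μ) * ∫ y, w y * v y ∂μ

theorem weightedCovariance_comm (μ : Measure α) (w u v : α → ℝ) :
    weightedCovariance μ w u v = weightedCovariance μ w v u := by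
  simp only [weightedCovariance, mul_comm (u _), mul_comm (∫ y, w y * u y ∂μ)]

theorem integral_mul_add_const (hw : Integrable w μ) (hmass : ∫ y, w y ∂μ = 1)
    (hu : Integrable (fun y => w y * u y) μ) (a : ℝ) :
    ∫ y, w y * (u y + a) ∂μ = ∫ y, w y * u y ∂μ + a := by
  simp only [mul_add]
  rw [integral_add hu (hw.mul_const a), integral_mul_const, hmass, one_mul]

theorem weightedCovariance_add_const_left (hw : Integrable w μ) (hmass : ∫ y, w y ∂μ = 1)
    (hu : Integrable (fun y => w y * u y) μ) (hv : Integrable (fun y => w y * v y) μ)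
    (huv : Integrable (fun y => w y * (u y * v y)) μ) (a : ℝ) :
    weightedCovariance μ w (fun y => u y + a) v = weightedCovariance μ w u v := by
  have h_prod : ∫ y, w y * ((u y + a) * v y) ∂μ =
      ∫ y, w y * (u y * v y) ∂μ + a * ∫ y, w y * v y ∂μ := by
    rw [← integral_const_mul, ← integral_add huv (hv.const_mul a)]
    congr with y
    ring
  rw [weightedCovariance, weightedCovariance, h_prod, integral_mul_add_const hw hmass hu]
  ring

theorem weightedCovariance_add_const (hw : Integrable w μ) (hmass : ∫ y, w y ∂μ = 1)
    (hu : Integrable (fun y => w y * u y) μ) (hv : Integrable (fun y => w y * v y) μ)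
    (huv : Integrable (fun y => w y * (u y * v y)) μ) (a b : ℝ) :
    weightedCovariance μ w (fun y => u y + a) (fun y => v y + b) =
      weightedCovariance μ w u v := by
  have hvb : Integrable (fun y => w y * (v y + b)) μ := by
    simp only [mul_add]
    exact hv.add (hw.mul_const b)
  have huvb : Integrable (fun y => w y * (u y * (v y + b))) μ := by
    refine (huv.add (hu.mul_const b)).congr (.of_forall fun y => ?_)
    simp only [Pi.add_apply]
    ring
  rw [weightedCovariance_add_const_left hw hmass hu hvb huvb, weightedCovariance_comm,
    weightedCovariance_add_const_left hw hmass hv hu (by simpa only [mul_comm (v _)] using huv),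
    weightedCovariance_comm]

end WeightedCovariance

theorem abs_mul_le_mul_sq {s t a b r : ℝ} (hs : |s| ≤ a * r) (ht : |t| ≤ b * r) :
    |s * t| ≤ a * b * r ^ 2 :=
  calc |s * t| = |s| * |t| := abs_mul s t
    _ ≤ (a * r) * (b * r) := mul_le_mul hs ht (abs_nonneg t) ((abs_nonneg s).trans hs)
    _ = a * b * r ^ 2 := by ring

theorem norm_mul_le_mul_mul_abs_left {s t c r : ℝ} (ht : |t| ≤ c * r) :
    ‖s * t‖ ≤ c * (r * |s|) :=
  calc ‖s * t‖ = |t| * |s| := by rw [Real.norm_eq_abs, abs_mul, mul_comm]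
    _ ≤ c * r * |s| := by gcongr
    _ = c * (r * |s|) := mul_assoc c r |s|

section AbsMoment

variable {E : Type*} [SeminormedAddCommGroup E] [MeasurableSpace E] {μ : Measure E} {ψ : E → ℝ}

/-- The `k`-th absolute moment `∫ ‖y‖ ^ k |ψ y|` of the signed density `ψ`. -/
def absMoment (μ : Measure E) (ψ : E → ℝ) (k : ℕ) : ℝ :=
  ∫ y, ‖y‖ ^ k * |ψ y| ∂μ

theorem absMoment_nonneg (μ : Measure E) (ψ : E → ℝ) (k : ℕ) : 0 ≤ absMoment μ ψ k :=
  integral_nonneg fun _ => by positivity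

theorem integrable_norm_mul_of_norm_sq_mul [OpensMeasurableSpace E] (hψ : Integrable ψ μ)
    (hψ₂ : Integrable (fun y => ‖y‖ ^ 2 * ψ y) μ) : Integrable (fun y => ‖y‖ * ψ y) μ := by
  refine (hψ.norm.add hψ₂.norm).mono'
    (continuous_norm.aestronglyMeasurable.mul hψ.aestronglyMeasurable)
    (.of_forall fun y => ?_)
  have h_norm : ‖y‖ ≤ 1 + ‖y‖ ^ 2 := by nlinarith [sq_nonneg (‖y‖ - 1)]
  calc ‖‖y‖ * ψ y‖ = ‖y‖ * ‖ψ y‖ := by rw [norm_mul, norm_norm]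
    _ ≤ (1 + ‖y‖ ^ 2) * ‖ψ y‖ := by gcongr
    _ = ‖ψ y‖ + ‖‖y‖ ^ 2 * ψ y‖ := by rw [norm_mul, norm_pow, norm_norm]; ring

theorem integrable_mul_of_abs_le_mul_norm_pow {h : E → ℝ} {c : ℝ} {k : ℕ}
    (hψ : AEStronglyMeasurable ψ μ) (hψk : Integrable (fun y => ‖y‖ ^ k * ψ y) μ)
    (hmeas : AEStronglyMeasurable h μ) (hh : ∀ y, |h y| ≤ c * ‖y‖ ^ k) :
    Integrable (fun y => ψ y * h y) μ := by
  refine (hψk.norm.const_mul c).mono' (hψ.mul hmeas) (.of_forall fun y => ?_)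
  simpa using norm_mul_le_mul_mul_abs_left (hh y)

theorem abs_integral_mul_le_mul_absMoment {h : E → ℝ} {c : ℝ} {k : ℕ}
    (hψk : Integrable (fun y => ‖y‖ ^ k * ψ y) μ) (hh : ∀ y, |h y| ≤ c * ‖y‖ ^ k) :
    |∫ y, ψ y * h y ∂μ| ≤ c * absMoment μ ψ k := by
  rw [absMoment, ← integral_const_mul]
  refine norm_integral_le_of_norm_le (.const_mul ?_ c)
    (.of_forall fun y => norm_mul_le_mul_mul_abs_left (hh y))
  simpa using hψk.norm

theorem abs_weightedCovariance_le {u v : E → ℝ} {a b : ℝ}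
    (hψ₁ : Integrable (fun y => ‖y‖ * ψ y) μ) (hψ₂ : Integrable (fun y => ‖y‖ ^ 2 * ψ y) μ)
    (hu : ∀ y, |u y| ≤ a * ‖y‖) (hv : ∀ y, |v y| ≤ b * ‖y‖) :
    |weightedCovariance μ ψ u v| ≤ (absMoment μ ψ 2 + absMoment μ ψ 1 ^ 2) * a * b := by
  have hIu := abs_integral_mul_le_mul_absMoment (k := 1) (by simpa using hψ₁) (by simpa using hu)
  have hIv := abs_integral_mul_le_mul_absMoment (k := 1) (by simpa using hψ₁) (by simpa using hv)
  have hIuv := abs_integral_mul_le_mul_absMoment hψ₂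
    fun y => abs_mul_le_mul_sq (hu y) (hv y)
  calc |weightedCovariance μ ψ u v|
      ≤ |∫ y, ψ y * (u y * v y) ∂μ| + |∫ y, ψ y * u y ∂μ| * |∫ y, ψ y * v y ∂μ| := by
        rw [← abs_mul]
        exact abs_sub _ _
    _ ≤ a * b * absMoment μ ψ 2 + (a * absMoment μ ψ 1) * (b * absMoment μ ψ 1) :=
        add_le_add hIuv (mul_le_mul hIu hIv (abs_nonneg _) ((abs_nonneg _).trans hIu))
    _ = (absMoment μ ψ 2 + absMoment μ ψ 1 ^ 2) * a * b := by ring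

theorem abs_weightedCovariance_add_const_le [OpensMeasurableSpace E] {u v : E → ℝ} {a b : ℝ}
    (hψ : Integrable ψ μ) (hψ₂ : Integrable (fun y => ‖y‖ ^ 2 * ψ y) μ)
    (hmass : ∫ y, ψ y ∂μ = 1) (hu_meas : AEStronglyMeasurable u μ)
    (hv_meas : AEStronglyMeasurable v μ) (hu : ∀ y, |u y| ≤ a * ‖y‖)
    (hv : ∀ y, |v y| ≤ b * ‖y‖) (s t : ℝ) :
    |weightedCovariance μ ψ (fun y => u y + s) fun y => v y + t| ≤
      (absMoment μ ψ 2 + absMoment μ ψ 1 ^ 2) * a * b := by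
  have hψ₁ := integrable_norm_mul_of_norm_sq_mul hψ hψ₂
  have hu_int : Integrable (fun y => ψ y * u y) μ :=
    integrable_mul_of_abs_le_mul_norm_pow (k := 1) hψ.1 (by simpa using hψ₁) hu_meas
      (by simpa using hu)
  have hv_int : Integrable (fun y => ψ y * v y) μ :=
    integrable_mul_of_abs_le_mul_norm_pow (k := 1) hψ.1 (by simpa using hψ₁) hv_meas
      (by simpa using hv)
  have huv_int : Integrable (fun y => ψ y * (u y * v y)) μ :=
    integrable_mul_of_abs_le_mul_norm_pow hψ.1 hψ₂ (hu_meas.mul hv_meas)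
      fun y => abs_mul_le_mul_sq (hu y) (hv y)
  rw [weightedCovariance_add_const hψ hmass hu_int hv_int huv_int]
  exact abs_weightedCovariance_le hψ₁ hψ₂ hu hv

end AbsMoment

theorem abs_comp_sub_left_sub_le {E : Type*} [SeminormedAddCommGroup E] {f : E → ℝ}
    {A : ℝ≥0} (hf : LipschitzWith A f) (x y : E) : |f (x - y) - f x| ≤ A * ‖y‖ := by
  simpa [Real.dist_eq] using hf.dist_le_mul (x - y) x

theorem abs_convolution_mul_sub_mul_convolution_le {E : Type*} [SeminormedAddCommGroup E]
    [MeasurableSpace E] [OpensMeasurableSpace E] {μ : Measure E} {ψ f g : E → ℝ} {A B : ℝ≥0}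
    (hψ : Integrable ψ μ) (hψ₂ : Integrable (fun y => ‖y‖ ^ 2 * ψ y) μ)
    (hmass : ∫ y, ψ y ∂μ = 1) (hf : LipschitzWith A f) (hg : LipschitzWith B g) (x : E) :
    |(ψ ⋆[.lsmul ℝ ℝ, μ] fun y => f y * g y) x -
        (ψ ⋆[.lsmul ℝ ℝ, μ] f) x * (ψ ⋆[.lsmul ℝ ℝ, μ] g) x| ≤
      (absMoment μ ψ 2 + absMoment μ ψ 1 ^ 2) * A * B := by
  have h_meas : ∀ {h : E → ℝ} {K : ℝ≥0}, LipschitzWith K h →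
      AEStronglyMeasurable (fun y => h (x - y) - h x) μ := fun h_lip =>
    ((h_lip.continuous.comp (continuous_sub_left x)).sub continuous_const).aestronglyMeasurable
  have h_cov := abs_weightedCovariance_add_const_le hψ hψ₂ hmass (h_meas hf) (h_meas hg)
    (abs_comp_sub_left_sub_le hf x) (abs_comp_sub_left_sub_le hg x) (f x) (g x)
  simp only [sub_add_cancel] at h_cov
  exact h_cov

section Dilation

variable {E : Type*} [NormedAddCommGroup E] [NormedSpace ℝ E]

/-- The mollifier `φ_ℓ = ℓ ^ (-n) φ (· / ℓ)` at scale `ℓ`, where `n` is the dimension. -/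
def dilatedKernel (φ : E → ℝ) (ℓ : ℝ) (y : E) : ℝ :=
  (ℓ ^ Module.finrank ℝ E)⁻¹ * φ (ℓ⁻¹ • y)

variable [FiniteDimensional ℝ E] [MeasurableSpace E] [BorelSpace E] {μ : Measure E}
  [μ.IsAddHaarMeasure] {φ : E → ℝ} {ℓ : ℝ}

theorem integral_mul_dilatedKernel (hℓ : 0 < ℓ) (h : E → ℝ) :
    ∫ y, h y * dilatedKernel φ ℓ y ∂μ = ∫ z, h (ℓ • z) * φ z ∂μ := by
  have h_pow : 0 < ℓ ^ Module.finrank ℝ E := by positivity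
  have h_scale := Measure.integral_comp_inv_smul_of_nonneg μ (fun z => h (ℓ • z) * φ z) hℓ.le
  simp only [smul_inv_smul₀ hℓ.ne', smul_eq_mul] at h_scale
  simp only [dilatedKernel, mul_left_comm (h _)]
  rw [integral_const_mul, h_scale, inv_mul_cancel_left₀ h_pow.ne']

theorem integrable_mul_dilatedKernel {h : E → ℝ} (hℓ : 0 < ℓ)
    (hφ : Integrable (fun z => h (ℓ • z) * φ z) μ) :
    Integrable (fun y => h y * dilatedKernel φ ℓ y) μ := by
  have h_comp := (integrable_comp_smul_iff μ _ (inv_ne_zero hℓ.ne')).2 hφ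
  simp only [smul_inv_smul₀ hℓ.ne'] at h_comp
  simpa only [dilatedKernel, mul_left_comm (h _)] using h_comp.const_mul _

theorem integrable_norm_pow_mul_dilatedKernel {k : ℕ} (hℓ : 0 < ℓ)
    (hφ : Integrable (fun z => ‖z‖ ^ k * φ z) μ) :
    Integrable (fun y => ‖y‖ ^ k * dilatedKernel φ ℓ y) μ := by
  refine integrable_mul_dilatedKernel hℓ ?_
  simpa only [norm_smul, mul_pow, mul_assoc] using hφ.const_mul (‖ℓ‖ ^ k)

theorem absMoment_dilatedKernel (hℓ : 0 < ℓ) (k : ℕ) :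
    absMoment μ (dilatedKernel φ ℓ) k = ℓ ^ k * absMoment μ φ k := by
  have h_abs : ∀ y, |dilatedKernel φ ℓ y| = dilatedKernel (fun z => |φ z|) ℓ y := fun y => by
    rw [dilatedKernel, dilatedKernel, abs_mul, abs_of_pos (by positivity)]
  simp only [absMoment, h_abs]
  rw [integral_mul_dilatedKernel hℓ, ← integral_const_mul]
  simp only [norm_smul, Real.norm_of_nonneg hℓ.le, mul_pow, mul_assoc]

theorem mollification_double_commutator_estimate_general (hφ : Integrable φ μ)
    (hφ₂ : Integrable (fun z => ‖z‖ ^ 2 * φ z) μ) (hmass : ∫ z, φ z ∂μ = 1) :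
    ∃ C : ℝ, 0 < C ∧ ∀ {f g : E → ℝ} {A B : ℝ≥0} {ℓ : ℝ}, 0 < ℓ →
      LipschitzWith A f → LipschitzWith B g → ∀ x : E,
        |(dilatedKernel φ ℓ ⋆[.lsmul ℝ ℝ, μ] fun y => f y * g y) x -
            (dilatedKernel φ ℓ ⋆[.lsmul ℝ ℝ, μ] f) x * (dilatedKernel φ ℓ ⋆[.lsmul ℝ ℝ, μ] g) x| ≤
          C * ℓ ^ 2 * A * B := by
  have hM₂ := absMoment_nonneg μ φ 2
  refine ⟨absMoment μ φ 2 + absMoment μ φ 1 ^ 2 + 1, by positivity,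
    fun {f g A B ℓ} hℓ hf hg x => ?_⟩
  have h_int : Integrable (dilatedKernel φ ℓ) μ := by
    simpa using integrable_norm_pow_mul_dilatedKernel (k := 0) hℓ (by simpa using hφ)
  have h_mass : ∫ y, dilatedKernel φ ℓ y ∂μ = 1 := by
    simpa [hmass] using integral_mul_dilatedKernel (μ := μ) (φ := φ) hℓ fun _ => 1
  refine (abs_convolution_mul_sub_mul_convolution_le h_int
    (integrable_norm_pow_mul_dilatedKernel hℓ hφ₂) h_mass hf hg x).trans ?_
  calc _ = (absMoment μ φ 2 + absMoment μ φ 1 ^ 2) * ℓ ^ 2 * A * B := by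
        rw [absMoment_dilatedKernel hℓ, absMoment_dilatedKernel hℓ]
        ring
    _ ≤ _ := by
        gcongr ?_ * ℓ ^ 2 * A * B
        exact (lt_add_one _).le

end Dilation

theorem mollify_eq_convolution (n : ℕ) (φ : (Fin n → ℝ) → ℝ) (ℓ : ℝ) (f : (Fin n → ℝ) → ℝ) :
    mollify n φ ℓ f = dilatedKernel φ ℓ ⋆[.lsmul ℝ ℝ, volume] f := by
  ext x
  simp only [mollify, convolution_def, dilatedKernel, Module.finrank_fin_fun,
    ContinuousLinearMap.lsmul_apply, smul_eq_mul, mul_comm (f _)]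

theorem lipschitzWith_iSup_nnnorm_fderiv {E F : Type*} [NormedAddCommGroup E] [NormedSpace ℝ E]
    [NormedAddCommGroup F] [NormedSpace ℝ F] {f : E → F} (hf : Differentiable ℝ f)
    (hbdd : BddAbove (Set.range fun x => ‖fderiv ℝ f x‖)) :
    LipschitzWith (⨆ x, ‖fderiv ℝ f x‖₊) f := by
  have hbdd' : BddAbove (Set.range fun x => ‖fderiv ℝ f x‖₊) := by
    rw [← NNReal.bddAbove_coe, ← Set.range_comp]
    exact hbdd
  exact lipschitzWith_of_nnnorm_fderiv_le hf fun x => le_ciSup hbdd' x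

theorem mollification_double_commutator_estimate
    (n : ℕ) (hn : 1 ≤ n)
    (φ : (Fin n → ℝ) → ℝ) (hφ : ContDiff ℝ (⊤ : ℕ∞) φ) (hφc : HasCompactSupport φ)
    (hφmass : ∫ x : Fin n → ℝ, φ x = 1) :
    ∃ C : ℝ, 0 < C ∧
      ∀ (f g : (Fin n → ℝ) → ℝ) (ℓ : ℝ), 0 < ℓ →
        ContDiff ℝ 1 f → ContDiff ℝ 1 g →
        (∃ Mf : ℝ, ∀ x, |f x| ≤ Mf) → (∃ Mg : ℝ, ∀ x, |g x| ≤ Mg) →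
        (∃ Mf' : ℝ, ∀ x, ‖fderiv ℝ f x‖ ≤ Mf') → (∃ Mg' : ℝ, ∀ x, ‖fderiv ℝ g x‖ ≤ Mg') →
        ∀ x : Fin n → ℝ,
          |mollify n φ ℓ (fun y => f y * g y) x - mollify n φ ℓ f x * mollify n φ ℓ g x|
            ≤ C * ℓ ^ 2 * (⨆ y : Fin n → ℝ, ‖fderiv ℝ f y‖) *
                (⨆ y : Fin n → ℝ, ‖fderiv ℝ g y‖) := by
  obtain ⟨C, hC, h_le⟩ := mollification_double_commutator_estimate_general
    (hφ.continuous.integrable_of_hasCompactSupport hφc)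
    (((continuous_norm.pow 2).mul hφ.continuous).integrable_of_hasCompactSupport hφc.mul_left)
    hφmass
  refine ⟨C, hC, fun f g ℓ hℓ hf hg _ _ hf' hg' x => ?_⟩
  have hf_lip := lipschitzWith_iSup_nnnorm_fderiv (hf.differentiable one_ne_zero)
    (hf'.imp fun _ => Set.forall_mem_range.2)
  have hg_lip := lipschitzWith_iSup_nnnorm_fderiv (hg.differentiable one_ne_zero)
    (hg'.imp fun _ => Set.forall_mem_range.2)
  simpa only [mollify_eq_convolution, NNReal.coe_iSup, coe_nnnorm] using h_le hℓ hf_lip hg_lip x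

end
end
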